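/- For every k ≥ 2, the inclusion of the family of context-free languages of index at most k in the family of languages generated by CD grammar systems with at most two context-free components working in the (t∧=k)-mode is strict: L_k(CF) ⊊ L(CD_2, CF[−λ], (t∧=k)), both with and without erasing rules. -/

import Mathlib

namespace CDHybrid

/-- Symbols: nonterminals are natural numbers, terminals come from `T`. -/
abbrev Symb (T : Type) := ℕ ⊕ T

/-- Sentential forms. -/
abbrev SForm (T : Type) := List (Symb T)

/-- A context-free rule `A → z`. -/
abbrev Rule (T : Type) := ℕ × SForm T

/-- Number of nonterminal occurrences in a sentential form. -/
def ntCount {T : Type} (x : SForm T) : ℕ := (x.filter Sum.isLeft).length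

/-- One rewriting step using some rule of the rule set `P`. -/
def RStep {T : Type} (P : List (Rule T)) (x y : SForm T) : Prop :=
  ∃ r ∈ P, ∃ u v : SForm T, x = u ++ Sum.inl r.1 :: v ∧ y = u ++ r.2 ++ v

/-- `m`-step derivation using only rules of `P`. -/
def StepsN {T : Type} (P : List (Rule T)) : ℕ → SForm T → SForm T → Prop
  | 0, x, y => x = y
  | m + 1, x, y => ∃ z, RStep P x z ∧ StepsN P m z y

/-- `m`-step derivation using only rules of `P`, all intermediate (and the final)
sentential forms having at most `b` occurrences of nonterminals. -/
def StepsNB {T : Type} (P : List (Rule T)) (b : ℕ) : ℕ → SForm T → SForm T → Prop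
  | 0, x, y => x = y
  | m + 1, x, y => ∃ z, RStep P x z ∧ ntCount z ≤ b ∧ StepsNB P b m z y

/-- Derivation modes of CD grammar systems. -/
inductive Mode where
  | eq : ℕ → Mode
  | le : ℕ → Mode
  | ge : ℕ → Mode
  | star : Mode
  | t : Mode
  | conj : Mode → Mode → Mode

/-- The predicate of a derivation mode: `modeOK P f m y` holds if an `m`-step
derivation by the component `P` ending in `y` is acceptable for mode `f`. -/
def modeOK {T : Type} (P : List (Rule T)) : Mode → ℕ → SForm T → Prop
  | .eq k, m, _ => m = k
  | .le k, m, _ => m ≤ k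
  | .ge k, m, _ => k ≤ m
  | .star, _, _ => True
  | .t, _, y => ¬ ∃ z, RStep P y z
  | .conj f g, m, y => modeOK P f m y ∧ modeOK P g m y

/-- A CD grammar system with context-free components. -/
structure CDGS (T : Type) where
  deg : ℕ
  start : ℕ
  comp : Fin deg → List (Rule T)

/-- λ-freeness: no erasing rules. -/
def CDGS.LamFree {T : Type} (G : CDGS T) : Prop :=
  ∀ i : Fin G.deg, ∀ r ∈ G.comp i, r.2 ≠ []

/-- One derivation step of a component of `G` in mode `f`. -/
def CDGS.ModeStep {T : Type} (G : CDGS T) (f : Mode) (x y : SForm T) : Prop :=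
  ∃ i : Fin G.deg, ∃ m : ℕ, StepsN (G.comp i) m x y ∧ modeOK (G.comp i) f m y

/-- One derivation step of a component of `G` in mode `f`, with all produced
sentential forms having at most `b` nonterminal occurrences. -/
def CDGS.ModeStepB {T : Type} (G : CDGS T) (f : Mode) (b : ℕ) (x y : SForm T) : Prop :=
  ∃ i : Fin G.deg, ∃ m : ℕ, StepsNB (G.comp i) b m x y ∧ modeOK (G.comp i) f m y

/-- The language generated by `G` in mode `f`. -/
def CDGS.lang {T : Type} (G : CDGS T) (f : Mode) : Set (List T) :=
  { w | Relation.TransGen (G.ModeStep f) [Sum.inl G.start] (w.map Sum.inr) }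

/-- The words of the language of `G` in mode `f` possessing a derivation of index
at most `b`, i.e., all sentential forms occurring in it have at most `b`
nonterminal occurrences. -/
def CDGS.langB {T : Type} (G : CDGS T) (f : Mode) (b : ℕ) : Set (List T) :=
  { w | ntCount ([Sum.inl G.start] : SForm T) ≤ b ∧
      Relation.TransGen (G.ModeStepB f b) [Sum.inl G.start] (w.map Sum.inr) }

/-- Two languages are considered equal iff they differ at most in the empty word. -/
def EqL {T : Type} (L₁ L₂ : Set (List T)) : Prop := L₁ \ {[]} = L₂ \ {[]}

/-- The family `L(CD_n, CF[−λ], f)`; `lf = true` forbids erasing rules. -/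
def CDFam (T : Type) (lf : Bool) (n : ℕ) (f : Mode) : Set (Set (List T)) :=
  { L | ∃ G : CDGS T, G.deg ≤ n ∧ (lf = true → G.LamFree) ∧ EqL (G.lang f) L }

/-- The family `L(CD_∞, CF[−λ], f)`. -/
def CDFamInf (T : Type) (lf : Bool) (f : Mode) : Set (Set (List T)) :=
  { L | ∃ G : CDGS T, (lf = true → G.LamFree) ∧ EqL (G.lang f) L }

/-- The family `L_m(CD_n, CF[−λ], f)` of such languages of index at most `m`. -/
def CDFamInd (T : Type) (lf : Bool) (n : ℕ) (f : Mode) (m : ℕ) : Set (Set (List T)) :=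
  { L | ∃ G : CDGS T, G.deg ≤ n ∧ (lf = true → G.LamFree) ∧ EqL (G.lang f) L ∧
      G.lang f ⊆ G.langB f m }

/-- The family `L_m(CD_∞, CF[−λ], f)`. -/
def CDFamIndInf (T : Type) (lf : Bool) (f : Mode) (m : ℕ) : Set (Set (List T)) :=
  { L | ∃ G : CDGS T, (lf = true → G.LamFree) ∧ EqL (G.lang f) L ∧ G.lang f ⊆ G.langB f m }

/-- The family `L_fin(CD_∞, CF[−λ], f)`. -/
def CDFamFinInf (T : Type) (lf : Bool) (f : Mode) : Set (Set (List T)) :=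
  { L | ∃ m : ℕ, 1 ≤ m ∧ L ∈ CDFamIndInf T lf f m }

/-- A context-free grammar. -/
structure CFG (T : Type) where
  start : ℕ
  rules : List (Rule T)

/-- The language generated by a context-free grammar. -/
def CFG.lang {T : Type} (G : CFG T) : Set (List T) :=
  { w | Relation.ReflTransGen (RStep G.rules) [Sum.inl G.start] (w.map Sum.inr) }

/-- The words of `G.lang` having a derivation of index at most `m`. -/
def CFG.langB {T : Type} (G : CFG T) (m : ℕ) : Set (List T) :=
  { w | ntCount ([Sum.inl G.start] : SForm T) ≤ m ∧
      Relation.ReflTransGen (fun x y => RStep G.rules x y ∧ ntCount y ≤ m)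
        [Sum.inl G.start] (w.map Sum.inr) }

/-- The family `L(CF)` of context-free languages. -/
def CFFam (T : Type) : Set (Set (List T)) := { L | ∃ G : CFG T, EqL G.lang L }

/-- The family `L_m(CF)` of context-free languages of index at most `m`. -/
def CFFamInd (T : Type) (m : ℕ) : Set (Set (List T)) :=
  { L | ∃ G : CFG T, EqL G.lang L ∧ G.lang ⊆ G.langB m }

/-- The family `L_fin(CF)` of context-free languages of finite index. -/
def CFFamFin (T : Type) : Set (Set (List T)) :=
  { L | ∃ m : ℕ, 1 ≤ m ∧ L ∈ CFFamInd T m }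

/-- A grammar is linear if every right-hand side contains at most one nonterminal. -/
def CFG.Linear {T : Type} (G : CFG T) : Prop := ∀ r ∈ G.rules, ntCount r.2 ≤ 1

/-- The family `L(LIN)` of linear context-free languages. -/
def LinFam (T : Type) : Set (Set (List T)) :=
  { L | ∃ G : CFG T, G.Linear ∧ EqL G.lang L }

/-- The family `L(FIN)` of finite languages. -/
def FinFam (T : Type) : Set (Set (List T)) := { L | L.Finite }

/-- A programmed grammar with context-free rules. -/
structure PG (T : Type) where
  start : ℕ
  nLab : ℕ
  rule : Fin nLab → Rule T
  succ : Fin nLab → Set (Fin nLab)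
  fail : Fin nLab → Set (Fin nLab)

def PG.LamFree {T : Type} (G : PG T) : Prop := ∀ r : Fin G.nLab, (G.rule r).2 ≠ []

/-- No appearance checking: all failure fields are empty. -/
def PG.NoAC {T : Type} (G : PG T) : Prop := ∀ r : Fin G.nLab, G.fail r = ∅

/-- One step of a programmed grammar on pairs (sentential form, label). -/
def PG.PStep {T : Type} (G : PG T) (p q : SForm T × Fin G.nLab) : Prop :=
  (∃ u v : SForm T, p.1 = u ++ Sum.inl (G.rule p.2).1 :: v ∧
      q.1 = u ++ (G.rule p.2).2 ++ v ∧ q.2 ∈ G.succ p.2) ∨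
  (Sum.inl (G.rule p.2).1 ∉ p.1 ∧ q.1 = p.1 ∧ q.2 ∈ G.fail p.2)

/-- The language generated by a programmed grammar. -/
def PG.lang {T : Type} (G : PG T) : Set (List T) :=
  { w | ∃ r₁ r₂ : Fin G.nLab,
      Relation.ReflTransGen G.PStep ([Sum.inl G.start], r₁) (w.map Sum.inr, r₂) }

/-- The words of `G.lang` having a derivation of index at most `m`. -/
def PG.langB {T : Type} (G : PG T) (m : ℕ) : Set (List T) :=
  { w | ∃ r₁ r₂ : Fin G.nLab, ntCount ([Sum.inl G.start] : SForm T) ≤ m ∧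
      Relation.ReflTransGen (fun p q => G.PStep p q ∧ ntCount q.1 ≤ m)
        ([Sum.inl G.start], r₁) (w.map Sum.inr, r₂) }

/-- The family `L_m(P, CF[−λ][, ac])`: programmed languages of index at most `m`;
`ac = false` forbids appearance checking, `lf = true` forbids erasing rules. -/
def PFamInd (T : Type) (lf ac : Bool) (m : ℕ) : Set (Set (List T)) :=
  { L | ∃ G : PG T, (lf = true → G.LamFree) ∧ (ac = false → G.NoAC) ∧
      EqL G.lang L ∧ G.lang ⊆ G.langB m }

/-- The family `L_fin(P, CF[−λ][, ac])` of programmed languages of finite index. -/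
def PFamFin (T : Type) (lf ac : Bool) : Set (Set (List T)) :=
  { L | ∃ m : ℕ, 1 ≤ m ∧ L ∈ PFamInd T lf ac m }


/-!
*Inclusion.* After elimination of erasing rules (which does not raise the index), one rewriting step
of an index-`k` grammar is simulated by two components. The first one rewrites one occurrence
`A → z'` and primes all other nonterminals, the second one removes the primes. A sentential form
has at most `k` nonterminals, so loops `A → A` can pad each phase to exactly `k` steps, and the
`t`-mode forces a phase to be complete.

*Strictness.* A two-component system generates a language containing every `aⁿbⁿcⁿ` with `n ≥ 1`
and only words with equally many `a`, `b` and `c`. Two nonterminals grow the blocks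
`aⁿbⁿ` and `cⁿ`; only one of them loops in each component, so a form in which the other one is
missing cannot make `k ≥ 2` steps or is stuck one phase later. No such language is context-free:
an additive invariant that is constant on a context-free language takes only finitely many values
on the phrases (yields of nonterminals in a derivation of a word). The differences of letter counts
are such invariants, and a long word has phrases of every order of magnitude; one that is shorter
than `n` misses `a` or `c`, and then its length is bounded by these differences.
-/


section Derivations

variable {T : Type} {P Q : List (Rule T)} {x y z x' y' : SForm T} {A m n : ℕ}

/-- Derivability by an arbitrary number of rewriting steps with rules of `P`. -/
abbrev Derives (P : List (Rule T)) : SForm T → SForm T → Prop :=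
  Relation.ReflTransGen (RStep P)

theorem RStep.append_append (h : RStep P x y) (u v : SForm T) :
    RStep P (u ++ x ++ v) (u ++ y ++ v) := by
  obtain ⟨r, hr, a, b, rfl, rfl⟩ := h
  exact ⟨r, hr, u ++ a, b ++ v, by simp, by simp⟩

theorem RStep.of_mem (h : (A, z) ∈ P) : RStep P [Sum.inl A] z :=
  ⟨_, h, [], [], by simp, by simp⟩

theorem not_exists_rstep_iff : (¬ ∃ y, RStep P x y) ↔ ∀ r ∈ P, Sum.inl r.1 ∉ x := by
  constructor
  · intro h r hr hx
    obtain ⟨u, v, rfl⟩ := List.append_of_mem hx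
    exact h ⟨_, r, hr, u, v, rfl, rfl⟩
  · rintro h ⟨_, r, hr, u, v, rfl, rfl⟩
    exact h r hr (by simp)

theorem mem_of_rstep_singleton (h : RStep P [Sum.inl A] y) : (A, y) ∈ P := by
  obtain ⟨⟨B, z⟩, hr, u, v, hA, rfl⟩ := h
  obtain ⟨rfl, hA, rfl⟩ | ⟨_, hv⟩ := List.singleton_eq_append_iff.1 hA
  · simp_all
  · simp at hv

theorem RStep.of_append (h : RStep P (x ++ x') y) :
    (∃ z, RStep P x z ∧ y = z ++ x') ∨ ∃ z, RStep P x' z ∧ y = x ++ z := by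
  obtain ⟨r, hr, u, v, hxx', rfl⟩ := h
  rcases List.append_eq_append_iff.1 hxx' with ⟨a, rfl, rfl⟩ | ⟨_ | ⟨s, a⟩, rfl, ha⟩
  · exact .inr ⟨a ++ r.2 ++ v, ⟨r, hr, a, v, rfl, rfl⟩, by simp⟩
  · exact .inr ⟨r.2 ++ v, ⟨r, hr, [], v, by simpa using ha.symm, by simp⟩, by simp⟩
  · obtain ⟨rfl, rfl⟩ := List.cons_eq_cons.1 ha
    exact .inl ⟨u ++ r.2 ++ a, ⟨r, hr, u, a, rfl, rfl⟩, by simp⟩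

theorem Derives.append_append (h : Derives P x y) (u v : SForm T) :
    Derives P (u ++ x ++ v) (u ++ y ++ v) :=
  h.lift (u ++ · ++ v) fun _ _ hs => hs.append_append u v

theorem Derives.append (h : Derives P x y) (h' : Derives P x' y') :
    Derives P (x ++ x') (y ++ y') := by
  have hx : Derives P (x ++ x') (y ++ x') := by simpa using h.append_append [] x'
  have hy : Derives P (y ++ x') (y ++ y') := by simpa using h'.append_append y []
  exact hx.trans hy

theorem Derives.eq_of_forall_inl_notMem (h : Derives P x y) (hx : ∀ A, Sum.inl A ∉ x) :
    x = y := by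
  rcases h.cases_head with rfl | ⟨z, hz, -⟩
  · rfl
  · exact absurd ⟨z, hz⟩ (not_exists_rstep_iff.2 fun r _ => hx r.1)

theorem Derives.map_inr_inj {w w' : List T} (h : Derives P (w.map Sum.inr) (w'.map Sum.inr)) :
    w = w' :=
  List.map_injective_iff.2 Sum.inr_injective (h.eq_of_forall_inl_notMem (by simp))

theorem Derives.mem_map_fst_of_mem {w : List T} (h : Derives P x (w.map Sum.inr))
    (hA : Sum.inl A ∈ x) : A ∈ P.map Prod.fst := by
  induction h using Relation.ReflTransGen.head_induction_on with
  | refl => simp at hA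
  | head hs _ ih =>
    obtain ⟨r, hr, u, v, rfl, rfl⟩ := hs
    rcases eq_or_ne A r.1 with rfl | hne
    · exact List.mem_map_of_mem hr
    · exact ih (by aesop)

theorem StepsN.derives (h : StepsN P m x y) : Derives P x y := by
  induction m generalizing x with
  | zero => exact h ▸ .refl
  | succ m ih =>
    obtain ⟨z, hz, h⟩ := h
    exact .head hz (ih h)

theorem Derives.exists_stepsN (h : Derives P x y) : ∃ m, StepsN P m x y := by
  induction h using Relation.ReflTransGen.head_induction_on with
  | refl => exact ⟨0, rfl⟩
  | head hs _ ih =>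
    obtain ⟨m, hm⟩ := ih
    exact ⟨m + 1, _, hs, hm⟩

theorem StepsN.trans (h : StepsN P m x y) (h' : StepsN P n y z) : StepsN P (m + n) x z := by
  induction m generalizing x with
  | zero => cases h; simpa using h'
  | succ m ih =>
    obtain ⟨a, ha, h⟩ := h
    rw [Nat.add_right_comm]
    exact ⟨a, ha, ih h⟩

theorem StepsN.append_append (h : StepsN P m x y) (u v : SForm T) :
    StepsN P m (u ++ x ++ v) (u ++ y ++ v) := by
  induction m generalizing x with
  | zero => cases h; rfl
  | succ m ih =>
    obtain ⟨a, ha, h⟩ := h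
    exact ⟨_, ha.append_append u v, ih h⟩

theorem StepsN.append (h : StepsN P m x y) (h' : StepsN P n x' y') :
    StepsN P (m + n) (x ++ x') (y ++ y') := by
  have hx : StepsN P m (x ++ x') (y ++ x') := by simpa using h.append_append [] x'
  have hy : StepsN P n (y ++ x') (y ++ y') := by simpa using h'.append_append y []
  exact hx.trans hy

theorem StepsN.of_mem (h : (A, z) ∈ P) : StepsN P 1 [Sum.inl A] z :=
  ⟨z, .of_mem h, rfl⟩

theorem StepsN.of_loop_mem (hloop : (A, [Sum.inl A]) ∈ P) (h : (A, z) ∈ P) (m : ℕ) :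
    StepsN P (m + 1) [Sum.inl A] z := by
  induction m with
  | zero => exact .of_mem h
  | succ m ih => exact ⟨_, .of_mem hloop, ih⟩

theorem StepsN.exists_of_append (h : StepsN P m (x ++ x') y) :
    ∃ i j z z', i + j = m ∧ z ++ z' = y ∧ StepsN P i x z ∧ StepsN P j x' z' := by
  induction m generalizing x x' with
  | zero => exact ⟨0, 0, x, x', rfl, h, rfl, rfl⟩
  | succ m ih =>
    obtain ⟨a, ha, h⟩ := h
    rcases ha.of_append with ⟨b, hb, rfl⟩ | ⟨b, hb, rfl⟩
    · obtain ⟨i, j, z, z', rfl, rfl, hz, hz'⟩ := ih h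
      exact ⟨i + 1, j, z, z', by omega, rfl, ⟨b, hb, hz⟩, hz'⟩
    · obtain ⟨i, j, z, z', rfl, rfl, hz, hz'⟩ := ih h
      exact ⟨i, j + 1, z, z', by omega, rfl, hz, ⟨b, hb, hz'⟩⟩

theorem ntCount_append (x y : SForm T) : ntCount (x ++ y) = ntCount x + ntCount y := by
  simp [ntCount]

theorem ntCount_cons_inl (A : ℕ) (x : SForm T) : ntCount (Sum.inl A :: x) = ntCount x + 1 := rfl

theorem ntCount_cons_inr (a : T) (x : SForm T) : ntCount (Sum.inr a :: x) = ntCount x := rfl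

theorem CDGS.modeStep_t_eq_iff {G : CDGS T} {k : ℕ} :
    G.ModeStep (.conj .t (.eq k)) x y ↔
      ∃ i, StepsN (G.comp i) k x y ∧ ∀ r ∈ G.comp i, Sum.inl r.1 ∉ y := by
  simp only [ModeStep, modeOK, not_exists_rstep_iff]
  constructor
  · rintro ⟨i, _, h, ht, rfl⟩
    exact ⟨i, h, ht⟩
  · rintro ⟨i, h, ht⟩
    exact ⟨i, k, h, ht, rfl⟩

/-- Renaming of the nonterminals of a sentential form. -/
def rename (f : ℕ → ℕ) (x : SForm T) : SForm T := x.map (Sum.map f id)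

variable {f g : ℕ → ℕ}

theorem rename_append (f : ℕ → ℕ) (x y : SForm T) :
    rename f (x ++ y) = rename f x ++ rename f y := by
  simp [rename]

theorem rename_cons_inl (f : ℕ → ℕ) (A : ℕ) (x : SForm T) :
    rename f (Sum.inl A :: x) = Sum.inl (f A) :: rename f x := rfl

theorem rename_cons_inr (f : ℕ → ℕ) (a : T) (x : SForm T) :
    rename f (Sum.inr a :: x) = Sum.inr a :: rename f x := rfl

theorem rename_nil (f : ℕ → ℕ) : rename f ([] : SForm T) = [] := rfl

theorem rename_map_inr (f : ℕ → ℕ) (w : List T) :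
    rename f (w.map Sum.inr) = w.map Sum.inr := by
  simp [rename]

theorem rename_id (x : SForm T) : rename id x = x := by
  simp [rename]

theorem rename_rename_of_leftInverse (h : Function.LeftInverse f g) (x : SForm T) :
    rename f (rename g x) = x := by
  simp [rename, h.comp_eq_id]

theorem inl_notMem_rename (h : ∀ B, g B ≠ A) (x : SForm T) : Sum.inl A ∉ rename g x := by
  simp [rename, h]

theorem Derives.rename_of_rules (hQ : ∀ r ∈ Q, Derives P [Sum.inl (f r.1)] (rename f r.2))
    (h : Derives Q x y) : Derives P (rename f x) (rename f y) := by
  refine h.lift' _ ?_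
  rintro _ _ ⟨r, hr, u, v, rfl, rfl⟩
  simpa only [Function.onFun, rename_append, rename_cons_inl, List.append_assoc,
    List.singleton_append] using (hQ r hr).append_append (rename f u) (rename f v)

end Derivations

section ErasingRules

variable {T : Type} {N : Set ℕ} {P : List (Rule T)} {x y x' y' z : SForm T} {A k : ℕ}

/-- One rewriting step of a derivation of index at most `k`, as in `CFG.langB`. -/
abbrev RStepB (P : List (Rule T)) (k : ℕ) (x y : SForm T) : Prop := RStep P x y ∧ ntCount y ≤ k

theorem Derives.of_rStepB (h : Relation.ReflTransGen (RStepB P k) x y) : Derives P x y :=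
  Relation.ReflTransGen.mono (fun _ _ h => h.1) _ _ h

theorem CFG.langB_subset_lang (G : CFG T) (k : ℕ) : G.langB k ⊆ G.lang :=
  fun _ hw => Derives.of_rStepB hw.2

/-- `Erasure N x y`: the sentential form `y` arises from `x` by deleting some occurrences of
nonterminals in `N`. -/
inductive Erasure (N : Set ℕ) : SForm T → SForm T → Prop
  | nil : Erasure N [] []
  | keep (s : Symb T) {x y : SForm T} : Erasure N x y → Erasure N (s :: x) (s :: y)
  | erase {A : ℕ} {x y : SForm T} : A ∈ N → Erasure N x y → Erasure N (Sum.inl A :: x) y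

theorem Erasure.refl (N : Set ℕ) (x : SForm T) : Erasure N x x := by
  induction x with
  | nil => exact .nil
  | cons s x ih => exact .keep s ih

theorem Erasure.sublist (h : Erasure N x y) : y.Sublist x := by
  induction h with
  | nil => exact .refl _
  | keep s _ ih => exact ih.cons_cons s
  | erase _ _ ih => exact ih.cons _

theorem Erasure.append (h : Erasure N x y) (h' : Erasure N x' y') :
    Erasure N (x ++ x') (y ++ y') := by
  induction h with
  | nil => exact h'
  | keep s _ ih => exact .keep s ih
  | erase hA _ ih => exact .erase hA ih

theorem Erasure.exists_of_append (h : Erasure N (x ++ x') y) :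
    ∃ z z', z ++ z' = y ∧ Erasure N x z ∧ Erasure N x' z' := by
  induction x generalizing y with
  | nil => exact ⟨[], y, rfl, .nil, h⟩
  | cons s x ih =>
    cases h with
    | keep _ h =>
      obtain ⟨z, z', rfl, hz, hz'⟩ := ih h
      exact ⟨s :: z, z', rfl, .keep s hz, hz'⟩
    | erase hA h =>
      obtain ⟨z, z', rfl, hz, hz'⟩ := ih h
      exact ⟨z, z', rfl, .erase hA hz, hz'⟩

/-- The nonterminals from which the empty word is derivable. -/
def nullable (P : List (Rule T)) : Set ℕ := { A | Derives P [Sum.inl A] [] }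

theorem Erasure.derives (h : Erasure (nullable P) x y) : Derives P x y := by
  induction h with
  | nil => exact .refl
  | keep s _ ih => exact Derives.append (x := [s]) .refl ih
  | erase hA _ ih => exact Derives.append hA ih

open Classical in
/-- The usual elimination of erasing rules: `A → z` is replaced by all rules `A → z'` where `z'` is
nonempty and arises from `z` by deleting nullable nonterminals. -/
noncomputable def nonErasingRules (P : List (Rule T)) : List (Rule T) :=
  P.flatMap fun r =>
    (r.2.sublists.filter fun z => Erasure (nullable P) r.2 z ∧ z ≠ []).map fun z => (r.1, z)

theorem mem_nonErasingRules :
    (A, z) ∈ nonErasingRules P ↔ z ≠ [] ∧ ∃ z₀, (A, z₀) ∈ P ∧ Erasure (nullable P) z₀ z := by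
  simp only [nonErasingRules, List.mem_flatMap, List.mem_map, List.mem_filter, List.mem_sublists,
    decide_eq_true_eq, Prod.mk.injEq]
  constructor
  · rintro ⟨⟨B, z₀⟩, hr, z', ⟨-, hz', hne⟩, rfl, rfl⟩
    exact ⟨hne, z₀, hr, hz'⟩
  · rintro ⟨hne, z₀, hr, hz⟩
    exact ⟨(A, z₀), hr, z, ⟨hz.sublist, hz, hne⟩, rfl, rfl⟩

theorem Derives.of_nonErasingRules (h : Derives (nonErasingRules P) x y) : Derives P x y := by
  simpa only [rename_id] using Derives.rename_of_rules (f := id) (fun ⟨A, z⟩ hr => by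
    obtain ⟨-, z₀, hz₀, hz⟩ := mem_nonErasingRules.1 hr
    simpa only [rename_id, id] using Relation.ReflTransGen.head (.of_mem hz₀) hz.derives) h

theorem exists_erasure_derives_nonErasingRules
    (h : Relation.ReflTransGen (RStepB P k) x y) :
    ∃ x', Erasure (nullable P) x x' ∧
      Relation.ReflTransGen (RStepB (nonErasingRules P) k) x' y := by
  induction h using Relation.ReflTransGen.head_induction_on with
  | refl => exact ⟨y, .refl _ _, .refl⟩
  | head hs _ ih =>
    obtain ⟨y', hy', hy⟩ := ih
    obtain ⟨⟨⟨A, z⟩, hr, u, v, rfl, rfl⟩, hk⟩ := hs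
    have hk' : ntCount y' ≤ k := (hy'.sublist.filter _).length_le.trans hk
    obtain ⟨_, v', rfl, huz, hv⟩ := hy'.exists_of_append
    obtain ⟨u', z', rfl, hu, hz⟩ := huz.exists_of_append
    by_cases hz' : z' = []
    · subst hz'
      have hA : A ∈ nullable P := .head (.of_mem hr) hz.derives
      exact ⟨u' ++ v', hu.append (.erase hA hv), by simpa using hy⟩
    · exact ⟨u' ++ Sum.inl A :: v', hu.append (.keep _ hv),
        .head ⟨⟨(A, z'), mem_nonErasingRules.2 ⟨hz', z, hr, hz⟩, u', v', rfl, rfl⟩, hk'⟩ hy⟩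

/-- The grammar `G` with its erasing rules eliminated; it generates `G.lang \ {[]}`. -/
noncomputable def CFG.nonErasing (G : CFG T) : CFG T := ⟨G.start, nonErasingRules G.rules⟩

theorem CFG.lang_nonErasing_subset (G : CFG T) : G.nonErasing.lang ⊆ G.lang :=
  fun _ hw => Derives.of_nonErasingRules hw

theorem CFG.langB_subset_langB_nonErasing (G : CFG T) (k : ℕ) :
    G.langB k \ {[]} ⊆ G.nonErasing.langB k := by
  rintro w ⟨⟨hk, hw⟩, hne⟩
  refine ⟨hk, ?_⟩
  obtain ⟨x', hx', hw'⟩ := exists_erasure_derives_nonErasingRules hw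
  cases hx' with
  | keep _ h => cases h; exact hw'
  | erase _ h =>
    cases h
    have hnil : Derives (nonErasingRules G.rules) ([].map Sum.inr) (w.map Sum.inr) := .of_rStepB hw'
    exact absurd hnil.map_inr_inj.symm hne

theorem CFG.rule_ne_nil_of_mem_nonErasing (G : CFG T) :
    ∀ r ∈ G.nonErasing.rules, r.2 ≠ [] :=
  fun _ hr => (mem_nonErasingRules.1 hr).1

theorem CFG.nil_notMem_lang {G : CFG T} (hG : ∀ r ∈ G.rules, r.2 ≠ []) : [] ∉ G.lang := by
  intro h
  rcases Relation.ReflTransGen.cases_tail h with h | ⟨_, -, r, hr, u, v, -, h⟩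
  · simp at h
  · simp [hG r hr] at h

theorem exists_nonErasing_of_mem_CFFamInd {L : Set (List T)} (hL : L ∈ CFFamInd T k) :
    ∃ G : CFG T, (∀ r ∈ G.rules, r.2 ≠ []) ∧ EqL G.lang L ∧ G.lang ⊆ G.langB k := by
  obtain ⟨G, hGL, hind⟩ := hL
  have hlangB : G.lang \ {[]} ⊆ G.nonErasing.langB k :=
    (Set.sdiff_subset_sdiff_left hind).trans (G.langB_subset_langB_nonErasing k)
  refine ⟨G.nonErasing, G.rule_ne_nil_of_mem_nonErasing, Eq.trans ?_ hGL, fun w hw => ?_⟩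
  · exact (Set.sdiff_subset_sdiff_left G.lang_nonErasing_subset).antisymm fun w hw =>
      ⟨CFG.langB_subset_lang _ k (hlangB hw), hw.2⟩
  · exact hlangB ⟨G.lang_nonErasing_subset hw,
      ne_of_mem_of_not_mem hw (CFG.nil_notMem_lang G.rule_ne_nil_of_mem_nonErasing)⟩

end ErasingRules


section Simulation

variable {T : Type} {P : List (Rule T)} {f g : ℕ → ℕ} {x y u v z : SForm T} {A k : ℕ} {w : List T}

theorem StepsN.rename_of_rules (h : ∀ A, Sum.inl A ∈ x → (f A, [Sum.inl (g A)]) ∈ P) :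
    StepsN P (ntCount x) (rename f x) (rename g x) := by
  induction x with
  | nil => rfl
  | cons s x ih =>
    have ih := ih fun A hA => h A (List.mem_cons_of_mem _ hA)
    rcases s with A | a
    · rw [ntCount_cons_inl, add_comm]
      exact (StepsN.of_mem (h A List.mem_cons_self)).append ih
    · simpa only [ntCount_cons_inr, rename_cons_inr, List.singleton_append, List.append_nil] using
        ih.append_append [Sum.inr a] []

theorem StepsN.rename_of_loop (hx : ntCount (u ++ Sum.inl A :: v) ≤ k)
    (h : ∀ B, Sum.inl B ∈ u ++ Sum.inl A :: v → (f B, [Sum.inl (g B)]) ∈ P)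
    (hloop : (f A, [Sum.inl (f A)]) ∈ P) (hz : (f A, z) ∈ P) :
    StepsN P k (rename f (u ++ Sum.inl A :: v)) (rename g u ++ z ++ rename g v) := by
  rw [ntCount_append, ntCount_cons_inl] at hx
  have hu : StepsN P (ntCount u) (rename f u) (rename g u) :=
    .rename_of_rules fun B hB => h B (by simp [hB])
  have hv : StepsN P (ntCount v) (rename f v) (rename g v) :=
    .rename_of_rules fun B hB => h B (by simp [hB])
  have hA := StepsN.of_loop_mem hloop hz (k - (ntCount u + ntCount v + 1))
  have hk : ntCount u + (k - (ntCount u + ntCount v + 1) + 1) + ntCount v = k := by omega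
  simpa only [hk, rename_append, rename_cons_inl, List.append_assoc, List.singleton_append] using
    (hu.append hA).append hv

/-- The code of the nonterminal `A` in sentential forms in which the next rewriting step of the
simulated grammar is still to be made. -/
def plain (A : ℕ) : ℕ := 2 * A

/-- The code of the nonterminal `A` in sentential forms in which a rewriting step of the simulated
grammar has just been made. -/
def primed (A : ℕ) : ℕ := 2 * A + 1

/-- The nonterminal coded by `plain A` and by `primed A`, that is, `A`. -/
def unmark (A : ℕ) : ℕ := A / 2

theorem unmark_plain : Function.LeftInverse unmark plain := fun A => by
  simp only [unmark, plain]; omega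

theorem unmark_primed : Function.LeftInverse unmark primed := fun A => by
  simp only [unmark, primed]; omega

theorem plain_ne_primed (A B : ℕ) : plain A ≠ primed B := by
  simp only [plain, primed]; omega

/-- The rules `f A → f A` and `f A → g A` for all left-hand sides `A` of `P`: the latter change the
marking of the nonterminals, the former pad the derivation to the required length. -/
def markingRules (f g : ℕ → ℕ) (P : List (Rule T)) : List (Rule T) :=
  P.map (fun r => (f r.1, [Sum.inl (f r.1)])) ++ P.map (fun r => (f r.1, [Sum.inl (g r.1)]))

/-- The component that makes one rewriting step with a rule of `P` and marks all nonterminals. -/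
def rewritingRules (P : List (Rule T)) : List (Rule T) :=
  P.map (fun r => (plain r.1, rename primed r.2)) ++ markingRules plain primed P

theorem mem_markingRules {r : Rule T} :
    r ∈ markingRules f g P ↔
      ∃ A ∈ P.map Prod.fst, r = (f A, [Sum.inl (f A)]) ∨ r = (f A, [Sum.inl (g A)]) := by
  simp only [markingRules, List.mem_append, List.mem_map]
  aesop

theorem mem_rewritingRules {r : Rule T} :
    r ∈ rewritingRules P ↔
      (∃ s ∈ P, r = (plain s.1, rename primed s.2)) ∨ r ∈ markingRules plain primed P := by
  simp only [rewritingRules, List.mem_append, List.mem_map, eq_comm]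

/-- The CD grammar system that simulates `G`: the first component makes a rewriting step, the second
one prepares the next step by removing the marks. -/
def CFG.toCDGS (G : CFG T) : CDGS T where
  deg := 2
  start := plain G.start
  comp := ![rewritingRules G.rules, markingRules primed plain G.rules]

variable {G : CFG T}

theorem CFG.forall_comp_toCDGS {p : List (Rule T) → Prop} :
    (∀ i, p (G.toCDGS.comp i)) ↔
      p (rewritingRules G.rules) ∧ p (markingRules primed plain G.rules) :=
  Fin.forall_fin_two

theorem CFG.lamFree_toCDGS (hG : ∀ r ∈ G.rules, r.2 ≠ []) : G.toCDGS.LamFree := by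
  refine (forall_comp_toCDGS (p := fun Q => ∀ r ∈ Q, r.2 ≠ [])).2
    ⟨fun r hr => ?_, fun r hr => ?_⟩
  · rcases mem_rewritingRules.1 hr with ⟨s, hs, rfl⟩ | hr
    · simpa [rename] using hG s hs
    · obtain ⟨A, -, rfl | rfl⟩ := mem_markingRules.1 hr <;> simp
  · obtain ⟨A, -, rfl | rfl⟩ := mem_markingRules.1 hr <;> simp

theorem derives_unmark_of_mem_markingRules (hf : Function.LeftInverse unmark f)
    (hg : Function.LeftInverse unmark g) {r : Rule T} (hr : r ∈ markingRules f g P) :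
    Derives P [Sum.inl (unmark r.1)] (rename unmark r.2) := by
  obtain ⟨A, -, rfl | rfl⟩ := mem_markingRules.1 hr <;>
    simpa only [rename_cons_inl, hf A, hg A] using .refl

theorem derives_unmark_of_mem_rewritingRules {r : Rule T} (hr : r ∈ rewritingRules P) :
    Derives P [Sum.inl (unmark r.1)] (rename unmark r.2) := by
  rcases mem_rewritingRules.1 hr with ⟨s, hs, rfl⟩ | hr
  · rw [unmark_plain, rename_rename_of_leftInverse unmark_primed]
    exact .single (.of_mem hs)
  · exact derives_unmark_of_mem_markingRules unmark_plain unmark_primed hr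

theorem CFG.derives_unmark_of_modeStep {m : Mode} (h : G.toCDGS.ModeStep m x y) :
    Derives G.rules (rename unmark x) (rename unmark y) := by
  obtain ⟨i, n, hn, -⟩ := h
  exact hn.derives.rename_of_rules <| forall_comp_toCDGS
    (p := fun Q => ∀ r ∈ Q, Derives G.rules [Sum.inl (unmark r.1)] (rename unmark r.2)) |>.2
    ⟨fun _ => derives_unmark_of_mem_rewritingRules,
      fun _ => derives_unmark_of_mem_markingRules unmark_primed unmark_plain⟩ i

theorem CFG.lang_toCDGS_subset (G : CFG T) (m : Mode) : G.toCDGS.lang m ⊆ G.lang := by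
  intro w hw
  have h : Derives G.rules (rename unmark [Sum.inl (plain G.start)])
      (rename unmark (w.map Sum.inr)) :=
    hw.to_reflTransGen.lift' (rename unmark) fun _ _ => derives_unmark_of_modeStep
  change Derives G.rules [Sum.inl G.start] (w.map Sum.inr)
  simpa only [rename_cons_inl, rename_nil, rename_map_inr, unmark_plain G.start] using h

theorem CFG.modeStep_rewriting (h : RStep G.rules x y) (hk : ntCount x ≤ k)
    (hx : ∀ A, Sum.inl A ∈ x → A ∈ G.rules.map Prod.fst) :
    G.toCDGS.ModeStep (.conj .t (.eq k)) (rename plain x) (rename primed y) := by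
  obtain ⟨r, hr, u, v, rfl, rfl⟩ := h
  refine CDGS.modeStep_t_eq_iff.2 ⟨(0 : Fin 2), ?_, ?_⟩
  · change StepsN (rewritingRules G.rules) k _ _
    rw [rename_append _ (u ++ r.2), rename_append _ u r.2]
    refine .rename_of_loop hk (fun B hB => ?_) ?_ ?_
    · exact mem_rewritingRules.2 (.inr (mem_markingRules.2 ⟨B, hx B hB, .inr rfl⟩))
    · exact mem_rewritingRules.2
        (.inr (mem_markingRules.2 ⟨r.1, List.mem_map_of_mem hr, .inl rfl⟩))
    · exact mem_rewritingRules.2 (.inl ⟨r, hr, rfl⟩)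
  · intro s hs
    obtain ⟨A, hA⟩ : ∃ A, s.1 = plain A := by
      rcases mem_rewritingRules.1 hs with ⟨s, -, rfl⟩ | hs
      · exact ⟨s.1, rfl⟩
      · obtain ⟨A, -, rfl | rfl⟩ := mem_markingRules.1 hs <;> exact ⟨A, rfl⟩
    exact hA ▸ inl_notMem_rename (fun B => (plain_ne_primed A B).symm) _

theorem CFG.modeStep_unmarking (hx : ∀ A, Sum.inl A ∈ x → A ∈ G.rules.map Prod.fst)
    (hk : ntCount x ≤ k) (hA : Sum.inl A ∈ x) :
    G.toCDGS.ModeStep (.conj .t (.eq k)) (rename primed x) (rename plain x) := by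
  refine CDGS.modeStep_t_eq_iff.2 ⟨(1 : Fin 2), ?_, ?_⟩
  · change StepsN (markingRules primed plain G.rules) k _ _
    obtain ⟨u, v, rfl⟩ := List.append_of_mem hA
    have hrule (B : ℕ) (hB : Sum.inl B ∈ u ++ Sum.inl A :: v) :
        (primed B, [Sum.inl (plain B)]) ∈ markingRules primed plain G.rules :=
      mem_markingRules.2 ⟨B, hx B hB, .inr rfl⟩
    simpa only [rename_append, rename_cons_inl, List.append_assoc, List.singleton_append] using
      StepsN.rename_of_loop hk hrule
        (mem_markingRules.2 ⟨A, hx A hA, .inl rfl⟩) (hrule A hA)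
  · intro s hs
    obtain ⟨B, -, rfl | rfl⟩ := mem_markingRules.1 hs <;>
      exact inl_notMem_rename (fun C => plain_ne_primed C B) _

theorem CFG.transGen_modeStep_toCDGS (hA : Sum.inl A ∈ x) (hk : ntCount x ≤ k)
    (h : Relation.ReflTransGen (RStepB G.rules k) x (w.map Sum.inr)) :
    Relation.TransGen (G.toCDGS.ModeStep (.conj .t (.eq k))) (rename plain x)
      (w.map Sum.inr) := by
  induction h using Relation.ReflTransGen.head_induction_on generalizing A with
  | refl => simp at hA
  | @head x y hs hy ih =>
    have hy : Derives G.rules y (w.map Sum.inr) := .of_rStepB hy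
    have hstep := modeStep_rewriting hs.1 hk fun _ => Derives.mem_map_fst_of_mem (.head hs.1 hy)
    by_cases hB : ∃ B, Sum.inl B ∈ y
    · obtain ⟨B, hB⟩ := hB
      exact .head hstep (.head (modeStep_unmarking (fun _ => hy.mem_map_fst_of_mem) hs.2 hB)
        (ih hB hs.2))
    · rw [hy.eq_of_forall_inl_notMem (not_exists.1 hB), rename_map_inr] at hstep
      exact .single hstep

theorem CFG.lang_toCDGS (h : G.lang ⊆ G.langB k) :
    G.toCDGS.lang (.conj .t (.eq k)) = G.lang :=
  (G.lang_toCDGS_subset _).antisymm fun _ hw =>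
    transGen_modeStep_toCDGS List.mem_cons_self (h hw).1 (h hw).2

theorem CFFamInd_subset_CDFam (T : Type) (lf : Bool) (k : ℕ) :
    CFFamInd T k ⊆ CDFam T lf 2 (.conj .t (.eq k)) := by
  intro L hL
  obtain ⟨G, hG, hGL, hind⟩ := exists_nonErasing_of_mem_CFFamInd hL
  exact ⟨G.toCDGS, le_rfl, fun _ => CFG.lamFree_toCDGS hG, CFG.lang_toCDGS hind ▸ hGL⟩

end Simulation


section Phrases

variable {T : Type} {P : List (Rule T)} {G : CFG T} {A m c r : ℕ}

theorem StepsN.exists_long_symbol {z : SForm T} {w : List T} (h : StepsN P m z (w.map Sum.inr))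
    (hc : z.length * c < w.length) :
    ∃ (s : Symb T) (u x v : List T), ∃ m' ≤ m, w = u ++ x ++ v ∧ c < x.length ∧
      StepsN P m' [s] (x.map Sum.inr) ∧
      Derives P z (u.map Sum.inr ++ s :: v.map Sum.inr) := by
  induction z generalizing m w with
  | nil =>
    have hw : [] = w := Derives.map_inr_inj (P := P) (by simpa using h.derives)
    simp [← hw] at hc
  | cons s z ih =>
    obtain ⟨i, j, y, y', rfl, hy, hi, hj⟩ := StepsN.exists_of_append (x := [s]) h
    obtain ⟨x, w', rfl, rfl, rfl⟩ := List.append_eq_map_iff.1 hy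
    by_cases hx : c < x.length
    · exact ⟨s, [], x, w', i, by omega, by simp, hx, hi,
        Derives.append (x := [s]) (y := [s]) .refl hj.derives⟩
    · have hw' : z.length * c < w'.length := by
        simp only [List.length_cons, List.length_append, add_mul] at hc
        omega
      obtain ⟨s', u, x', v, m', hm', rfl, hx', hs', hz⟩ := ih hj hw'
      refine ⟨s', x ++ u, x', v, m', by omega, by simp, hx', hs', ?_⟩
      simpa using Derives.append (x := [s]) hi.derives hz

/-- The phrases of the nonterminal `A`: the terminal words derived from an occurrence of `A` in a
derivation of a word of the language. -/
def CFG.phrases (G : CFG T) (A : ℕ) : Set (List T) :=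
  { x | Derives G.rules [Sum.inl A] (x.map Sum.inr) ∧ ∃ u v : List T,
      Derives G.rules [Sum.inl G.start] (u.map Sum.inr ++ Sum.inl A :: v.map Sum.inr) }

theorem CFG.exists_mem_phrases_of_stepsN (hr : ∀ p ∈ G.rules, p.2.length ≤ r) (hc : 1 ≤ c)
    {u x v : List T} (h : StepsN G.rules m [Sum.inl A] (x.map Sum.inr)) (hx : c < x.length)
    (hA : Derives G.rules [Sum.inl G.start] (u.map Sum.inr ++ Sum.inl A :: v.map Sum.inr)) :
    ∃ B, ∃ y ∈ G.phrases B, y <:+: x ∧ c < y.length ∧ y.length ≤ r * c := by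
  induction m using Nat.strong_induction_on generalizing A u x v with
  | _ m ih =>
  by_cases hshort : x.length ≤ r * c
  · exact ⟨A, x, ⟨h.derives, u, v, hA⟩, List.infix_rfl, hx, hshort⟩
  rcases m with _ | m
  · have hmem : Sum.inl A ∈ x.map Sum.inr := h ▸ List.mem_cons_self
    simp at hmem
  obtain ⟨z, hAz, hz⟩ := h
  have hzr : z.length ≤ r := hr _ (mem_of_rstep_singleton hAz)
  obtain ⟨s, u', x', v', m', hm', rfl, hx', hs, hzs⟩ :=
    hz.exists_long_symbol ((Nat.mul_le_mul_right c hzr).trans_lt (not_le.1 hshort))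
  rcases s with B | a
  · have hB : Derives G.rules [Sum.inl G.start]
        ((u ++ u').map Sum.inr ++ Sum.inl B :: (v' ++ v).map Sum.inr) := by
      have hctx := Derives.append_append (.head hAz hzs) (u.map Sum.inr) (v.map Sum.inr)
      exact hA.trans (by simpa using hctx)
    obtain ⟨C, y, hC, hy, hylen⟩ := ih m' (by omega) hs hx' hB
    exact ⟨C, y, hC, hy.trans ⟨u', v', rfl⟩, hylen⟩
  · have : [a] = x' := Derives.map_inr_inj (P := G.rules) (by simpa using hs.derives)
    simp [← this] at hx'
    omega

theorem CFG.exists_mem_phrases (hr : ∀ p ∈ G.rules, p.2.length ≤ r) (hc : 1 ≤ c) {w : List T}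
    (hw : w ∈ G.lang) (hcw : c < w.length) :
    ∃ B, ∃ y ∈ G.phrases B, y <:+: w ∧ c < y.length ∧ y.length ≤ r * c := by
  obtain ⟨m, hm⟩ := Derives.exists_stepsN hw
  exact exists_mem_phrases_of_stepsN hr hc hm hcw (u := []) (v := []) .refl

variable {M : Type*} [AddCancelMonoid M] {φ : List T → M}

theorem CFG.apply_eq_of_mem_phrases (hφ : ∀ x y, φ (x ++ y) = φ x + φ y)
    (hconst : ∀ w ∈ G.lang, ∀ w' ∈ G.lang, φ w = φ w') {x y : List T} (hx : x ∈ G.phrases A)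
    (hy : y ∈ G.phrases A) : φ x = φ y := by
  obtain ⟨hx, u, v, huv⟩ := hx
  have hmem {z : List T} (hz : Derives G.rules [Sum.inl A] (z.map Sum.inr)) :
      u ++ z ++ v ∈ G.lang := by
    change Derives G.rules [Sum.inl G.start] ((u ++ z ++ v).map Sum.inr)
    simpa using huv.trans (by simpa using hz.append_append (u.map Sum.inr) (v.map Sum.inr))
  have h := hconst _ (hmem hx) _ (hmem hy.1)
  simpa only [hφ, add_left_inj, add_right_inj] using h

theorem CFG.finite_image_phrases (hφ : ∀ x y, φ (x ++ y) = φ x + φ y)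
    (hconst : ∀ w ∈ G.lang, ∀ w' ∈ G.lang, φ w = φ w') :
    (φ '' ⋃ A, G.phrases A).Finite := by
  have hsub : φ '' ⋃ A, G.phrases A ⊆ ⋃ A ∈ {A | A ∈ G.rules.map Prod.fst}, φ '' G.phrases A := by
    rintro _ ⟨x, hx, rfl⟩
    obtain ⟨A, hA⟩ := Set.mem_iUnion.1 hx
    exact Set.mem_biUnion (hA.1.mem_map_fst_of_mem List.mem_cons_self) ⟨x, hA, rfl⟩
  refine ((List.finite_toSet _).biUnion fun A _ => Set.Subsingleton.finite ?_).subset hsub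
  rintro _ ⟨x, hx, rfl⟩ _ ⟨y, hy, rfl⟩
  exact apply_eq_of_mem_phrases hφ hconst hx hy

end Phrases

section EqualBlocks

theorem isInfix_append_or_of_length_le {α : Type*} {x p q s : List α} (h : x <:+: p ++ q ++ s)
    (hx : x.length ≤ q.length) : x <:+: p ++ q ∨ x <:+: q ++ s := by
  rcases List.infix_append_iff.1 h with h | h | ⟨y, z, rfl, hy, hz⟩
  · exact .inl h
  · exact .inr (List.infix_append_of_infix_right h)
  · have hy' : y <:+ q := List.suffix_of_suffix_length_le hy (List.suffix_append p q)
      (by simp only [List.length_append] at hx; omega)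
    exact .inr (List.infix_append_iff.2 (.inr (.inr ⟨y, z, rfl, hy', hz⟩)))

variable {T : Type} {e : Fin 3 ↪ T} {x : List T} {n : ℕ}

/-- The word `aⁿbⁿcⁿ`, where `a`, `b`, `c` are the letters `e 0`, `e 1`, `e 2`. -/
def abc (e : Fin 3 ↪ T) (n : ℕ) : List T :=
  List.replicate n (e 0) ++ List.replicate n (e 1) ++ List.replicate n (e 2)

theorem notMem_or_notMem_of_isInfix_abc (hx : x <:+: abc e n) (hlen : x.length ≤ n) :
    e 2 ∉ x ∨ e 0 ∉ x := by
  rcases isInfix_append_or_of_length_le hx (by simpa using hlen) with h | h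
  · exact .inl fun hmem => by simpa using h.subset hmem
  · exact .inr fun hmem => by simpa using h.subset hmem

variable [DecidableEq T]

theorem length_eq_of_isInfix_abc (hx : x <:+: abc e n) :
    x.length = x.count (e 0) + x.count (e 1) + x.count (e 2) := by
  have hmem : ∀ s ∈ (x : Multiset T), s ∈ Finset.univ.map e := fun s hs => by
    have hs' : s ∈ abc e n := hx.subset hs
    simp only [abc, List.mem_append, List.mem_replicate] at hs'
    aesop
  simpa [Fin.sum_univ_three] using (Multiset.sum_count_eq_card hmem).symm

/-- How many more letters `b` and how many more letters `c` than letters `a` a word contains. -/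
def letterExcess (e : Fin 3 ↪ T) (x : List T) : ℤ × ℤ :=
  (x.count (e 1) - x.count (e 0), x.count (e 2) - x.count (e 0))

theorem letterExcess_append (x y : List T) :
    letterExcess e (x ++ y) = letterExcess e x + letterExcess e y := by
  simp only [letterExcess, List.count_append, Nat.cast_add, Prod.mk_add_mk, Prod.mk.injEq]
  constructor <;> ring

theorem length_le_of_isInfix_abc (hx : x <:+: abc e n) (hlen : x.length ≤ n) :
    x.length ≤ (letterExcess e x).1.natAbs + 2 * (letterExcess e x).2.natAbs := by
  rw [length_eq_of_isInfix_abc hx]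
  simp only [letterExcess]
  rcases notMem_or_notMem_of_isInfix_abc hx hlen with h | h
  · have := List.count_eq_zero_of_not_mem h
    omega
  · have := List.count_eq_zero_of_not_mem h
    omega

theorem CFG.exists_length_le_of_mem_phrases {G : CFG T}
    (hG : ∀ w ∈ G.lang, letterExcess e w = 0) :
    ∃ b, ∀ A, ∀ x ∈ G.phrases A, ∀ n, x <:+: abc e n → x.length ≤ n → x.length ≤ b := by
  have hfin := G.finite_image_phrases letterExcess_append fun w hw w' hw' =>
    (hG w hw).trans (hG w' hw').symm
  obtain ⟨b, hb⟩ := (hfin.image fun p => p.1.natAbs + 2 * p.2.natAbs).bddAbove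
  refine ⟨b, fun A x hxA n hx hlen => (length_le_of_isInfix_abc hx hlen).trans (hb ?_)⟩
  exact Set.mem_image_of_mem _ (Set.mem_image_of_mem _ (Set.mem_iUnion_of_mem A hxA))

theorem notMem_CFFam_of_abc_mem {L : Set (List T)} (habc : ∀ n ≠ 0, abc e n ∈ L)
    (hL : ∀ w ∈ L, letterExcess e w = 0) : L ∉ CFFam T := by
  rintro ⟨G, hG⟩
  have hlang : ∀ w ≠ [], (w ∈ G.lang ↔ w ∈ L) := fun w hw => by
    simpa [hw] using Set.ext_iff.1 hG w
  have hexcess : ∀ w ∈ G.lang, letterExcess e w = 0 := fun w hw => by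
    rcases eq_or_ne w [] with rfl | hne
    · simp [letterExcess]
    · exact hL w ((hlang w hne).1 hw)
  obtain ⟨b, hb⟩ := G.exists_length_le_of_mem_phrases hexcess
  let r := (G.rules.map fun p => p.2.length).sum
  have hr : ∀ p ∈ G.rules, p.2.length ≤ r := fun p hp =>
    List.le_sum_of_mem (List.mem_map.2 ⟨p, hp, rfl⟩)
  let n := r * (b + 1) + (b + 1)
  have hn : b + 1 < (abc e n).length := by
    simp only [abc, List.length_append, List.length_replicate, n]
    omega
  have hmem : abc e n ∈ G.lang :=
    (hlang _ (List.ne_nil_of_length_pos (by omega))).2 (habc n (by omega))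
  obtain ⟨A, x, hxA, hx, hbx, hxr⟩ := G.exists_mem_phrases hr (by omega) hmem hn
  have := hb A x hxA n hx (by omega)
  omega

end EqualBlocks

section BlockSystem

variable {T : Type} {e : Fin 3 ↪ T} {x y X X' Y Y' : SForm T} {P : List (Rule T)} {i j k m n : ℕ}

/-- The component that adds one letter to each block. The nonterminals `0` and `2` stand for the
blocks `aⁿbⁿ` and `cⁿ`; the rules leading to `1` and `3` announce that the block will grow further,
and only `0` can loop. -/
def growingRules (e : Fin 3 ↪ T) : List (Rule T) :=
  [(0, [Sum.inl 0]), (0, [Sum.inr (e 0), Sum.inl 1, Sum.inr (e 1)]),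
    (0, [Sum.inr (e 0), Sum.inr (e 1)]), (2, [Sum.inr (e 2), Sum.inl 3]), (2, [Sum.inr (e 2)])]

/-- The component that starts the derivation and prepares the next round of growth; here only the
nonterminal `3` of the second block can loop, and so can the start symbol `4`. -/
def preparingRules : List (Rule T) :=
  [(4, [Sum.inl 4]), (4, [Sum.inl 0, Sum.inl 2]), (1, [Sum.inl 0]), (3, [Sum.inl 3]),
    (3, [Sum.inl 2])]

/-- A system which, for every `k ≥ 2`, generates `{aⁿbⁿcⁿ | n ≥ 1}` in the mode `t ∧ = k`. -/
def blockSystem (e : Fin 3 ↪ T) : CDGS T where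
  deg := 2
  start := 4
  comp := ![growingRules e, preparingRules]

theorem lamFree_blockSystem (e : Fin 3 ↪ T) : (blockSystem e).LamFree :=
  Fin.forall_fin_two.2 ⟨by simp [blockSystem, growingRules], by simp [blockSystem, preparingRules]⟩

theorem modeStep_blockSystem_iff :
    (blockSystem e).ModeStep (.conj .t (.eq k)) x y ↔
      (StepsN (growingRules e) k x y ∧ Sum.inl 0 ∉ y ∧ Sum.inl 2 ∉ y) ∨
      (StepsN preparingRules k x y ∧ Sum.inl 4 ∉ y ∧ Sum.inl 1 ∉ y ∧ Sum.inl 3 ∉ y) := by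
  rw [CDGS.modeStep_t_eq_iff]
  refine Fin.exists_fin_two.trans (or_congr ?_ ?_) <;>
    simp [blockSystem, growingRules, preparingRules]

/-- The sentential form `aⁿ X bⁿ cⁿ Y`. -/
def blockForm (e : Fin 3 ↪ T) (n : ℕ) (X Y : SForm T) : SForm T :=
  List.replicate n (Sum.inr (e 0)) ++ X ++
    (List.replicate n (Sum.inr (e 1)) ++ List.replicate n (Sum.inr (e 2))) ++ Y

theorem blockForm_succ (n : ℕ) (X Y : SForm T) :
    blockForm e (n + 1) X Y =
      blockForm e n (Sum.inr (e 0) :: X ++ [Sum.inr (e 1)]) (Sum.inr (e 2) :: Y) := by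
  rw [blockForm, List.replicate_succ', List.replicate_succ (a := Sum.inr (e 1)),
    List.replicate_succ' (a := Sum.inr (e 2))]
  simp only [blockForm, List.append_assoc, List.cons_append, List.nil_append]

theorem blockForm_nil_nil (n : ℕ) : blockForm e n [] [] = (abc e n).map Sum.inr := by
  simp [blockForm, abc]

theorem StepsN.blockForm (hX : StepsN P i X X') (hY : StepsN P j Y Y') :
    StepsN P (i + j) (blockForm e n X Y) (blockForm e n X' Y') :=
  (hX.append_append _ _).append hY

variable (e n) in
theorem modeStep_growing :
    (blockSystem e).ModeStep (.conj .t (.eq (k + 2))) (blockForm e n [Sum.inl 0] [Sum.inl 2])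
      (blockForm e (n + 1) [Sum.inl 1] [Sum.inl 3]) := by
  refine modeStep_blockSystem_iff.2 (.inl ⟨?_, by simp [blockForm], by simp [blockForm]⟩)
  rw [blockForm_succ]
  exact .blockForm (i := k + 1) (j := 1)
    (.of_loop_mem (by simp [growingRules]) (by simp [growingRules]) k)
    (.of_mem (by simp [growingRules]))

variable (e n) in
theorem modeStep_finishing :
    (blockSystem e).ModeStep (.conj .t (.eq (k + 2))) (blockForm e n [Sum.inl 0] [Sum.inl 2])
      ((abc e (n + 1)).map Sum.inr) := by
  rw [← blockForm_nil_nil]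
  refine modeStep_blockSystem_iff.2 (.inl ⟨?_, by simp [blockForm], by simp [blockForm]⟩)
  rw [blockForm_succ]
  exact .blockForm (i := k + 1) (j := 1)
    (.of_loop_mem (by simp [growingRules]) (by simp [growingRules]) k)
    (.of_mem (by simp [growingRules]))

variable (e n) in
theorem modeStep_preparing :
    (blockSystem e).ModeStep (.conj .t (.eq (k + 2))) (blockForm e n [Sum.inl 1] [Sum.inl 3])
      (blockForm e n [Sum.inl 0] [Sum.inl 2]) := by
  refine modeStep_blockSystem_iff.2
    (.inr ⟨?_, by simp [blockForm], by simp [blockForm], by simp [blockForm]⟩)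
  rw [show k + 2 = 1 + (k + 1) by omega]
  exact .blockForm (.of_mem (by simp [preparingRules]))
    (.of_loop_mem (by simp [preparingRules]) (by simp [preparingRules]) k)

variable (e) in
theorem modeStep_starting :
    (blockSystem e).ModeStep (.conj .t (.eq (k + 2))) [Sum.inl 4]
      (blockForm e 0 [Sum.inl 0] [Sum.inl 2]) :=
  modeStep_blockSystem_iff.2 <| .inr
    ⟨StepsN.of_loop_mem (by simp [preparingRules]) (by simp [preparingRules, blockForm]) (k + 1),
      by simp [blockForm], by simp [blockForm], by simp [blockForm]⟩

theorem abc_mem_lang_blockSystem (hk : 2 ≤ k) (hn : n ≠ 0) :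
    abc e n ∈ (blockSystem e).lang (.conj .t (.eq k)) := by
  obtain ⟨k, rfl⟩ := Nat.exists_eq_add_of_le' hk
  obtain ⟨n, rfl⟩ := Nat.exists_eq_succ_of_ne_zero hn
  have hreach : Relation.TransGen ((blockSystem e).ModeStep (.conj .t (.eq (k + 2))))
      [Sum.inl 4] (blockForm e n [Sum.inl 0] [Sum.inl 2]) := by
    clear hn
    induction n with
    | zero => exact .single (modeStep_starting e)
    | succ n ih => exact (ih.tail (modeStep_growing e n)).tail (modeStep_preparing e (n + 1))
  exact hreach.tail (modeStep_finishing e n)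

theorem RStep.exists_perm (h : RStep P x y) :
    ∃ r ∈ P, ∃ z, x.Perm (Sum.inl r.1 :: z) ∧ y.Perm (r.2 ++ z) := by
  obtain ⟨r, hr, u, v, rfl, rfl⟩ := h
  refine ⟨r, hr, u ++ v, List.perm_middle, ?_⟩
  simpa using List.perm_append_comm_assoc u r.2 v

instance {α β : Type*} [BEq α] [LawfulBEq α] [BEq β] [LawfulBEq β] : LawfulBEq (α ⊕ β) where
  eq_of_beq := by
    rintro (a | b) (a' | b') h
    · exact congrArg Sum.inl (eq_of_beq h)
    · cases h
    · cases h
    · exact congrArg Sum.inr (eq_of_beq h)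
  rfl := by
    rintro (a | b)
    · exact beq_self_eq_true a
    · exact beq_self_eq_true b

variable [DecidableEq T]

/-- The invariant of the derivations of `blockSystem e`: at most one nonterminal for each block, the
second block is present if the first one is in its growing state, and there are equally many
letters of each kind. -/
structure BlockInvariant (e : Fin 3 ↪ T) (x : SForm T) : Prop where
  left_le : x.count (Sum.inl 4) + x.count (Sum.inl 0) + x.count (Sum.inl 1) ≤ 1
  right_le : x.count (Sum.inl 4) + x.count (Sum.inl 2) + x.count (Sum.inl 3) ≤ 1
  left_le_right : x.count (Sum.inl 0) ≤ x.count (Sum.inl 2)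
  count_eq_one : x.count (Sum.inr (e 1)) = x.count (Sum.inr (e 0))
  count_eq_two : x.count (Sum.inr (e 2)) = x.count (Sum.inr (e 0))

theorem StepsN.growing_count (h : StepsN (growingRules e) m x y) :
    y.count (.inl 4) + y.count (.inl 0) + y.count (.inl 1) ≤
      x.count (.inl 4) + x.count (.inl 0) + x.count (.inl 1) ∧
    y.count (.inl 4) + y.count (.inl 2) + y.count (.inl 3) ≤
      x.count (.inl 4) + x.count (.inl 2) + x.count (.inl 3) ∧
    y.count (.inr (e 0)) + y.count (.inl 0) = x.count (.inr (e 0)) + x.count (.inl 0) ∧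
    y.count (.inr (e 1)) + y.count (.inl 0) = x.count (.inr (e 1)) + x.count (.inl 0) ∧
    y.count (.inr (e 2)) + y.count (.inl 2) = x.count (.inr (e 2)) + x.count (.inl 2) := by
  induction m generalizing x with
  | zero => cases h; simp
  | succ m ih =>
    obtain ⟨z, hxz, hzy⟩ := h
    obtain ⟨r, hr, u, hx, hz⟩ := hxz.exists_perm
    have ih := ih hzy
    simp only [growingRules, List.mem_cons, List.not_mem_nil, or_false] at hr
    simp only [hz.count_eq] at ih
    simp only [hx.count_eq]
    rcases hr with rfl | rfl | rfl | rfl | rfl <;> simp at ih ⊢ <;> omega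

theorem StepsN.growing_add_count (h : StepsN (growingRules e) m x y)
    (h0 : x.count (.inl 0) = 0) : m + y.count (.inl 2) = x.count (.inl 2) := by
  induction m generalizing x with
  | zero => cases h; simp
  | succ m ih =>
    obtain ⟨z, hxz, hzy⟩ := h
    obtain ⟨r, hr, u, hx, hz⟩ := hxz.exists_perm
    have ih := ih hzy
    simp only [growingRules, List.mem_cons, List.not_mem_nil, or_false] at hr
    simp only [hz.count_eq] at ih
    simp only [hx.count_eq] at h0 ⊢
    rcases hr with rfl | rfl | rfl | rfl | rfl <;> simp at h0 ih ⊢ <;> omega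

theorem StepsN.preparing_count (h : StepsN preparingRules m x y) (a : T) :
    y.count (.inl 4) + y.count (.inl 0) + y.count (.inl 1) =
      x.count (.inl 4) + x.count (.inl 0) + x.count (.inl 1) ∧
    y.count (.inl 4) + y.count (.inl 2) + y.count (.inl 3) =
      x.count (.inl 4) + x.count (.inl 2) + x.count (.inl 3) ∧
    y.count (.inr a) = x.count (.inr a) := by
  induction m generalizing x with
  | zero => cases h; simp
  | succ m ih =>
    obtain ⟨z, hxz, hzy⟩ := h
    obtain ⟨r, hr, u, hx, hz⟩ := hxz.exists_perm
    have ih := ih hzy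
    simp only [preparingRules, List.mem_cons, List.not_mem_nil, or_false] at hr
    simp only [hz.count_eq] at ih
    simp only [hx.count_eq]
    rcases hr with rfl | rfl | rfl | rfl | rfl <;> simp at ih ⊢ <;> omega

theorem StepsN.preparing_add_count (h : StepsN preparingRules m x y)
    (h4 : x.count (.inl 4) = 0) (h3 : x.count (.inl 3) = 0) :
    m + y.count (.inl 1) = x.count (.inl 1) := by
  induction m generalizing x with
  | zero => cases h; simp
  | succ m ih =>
    obtain ⟨z, hxz, hzy⟩ := h
    obtain ⟨r, hr, u, hx, hz⟩ := hxz.exists_perm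
    have ih := ih hzy
    simp only [preparingRules, List.mem_cons, List.not_mem_nil, or_false] at hr
    simp only [hz.count_eq] at ih
    simp only [hx.count_eq] at h4 h3 ⊢
    rcases hr with rfl | rfl | rfl | rfl | rfl <;> simp at h4 h3 ih ⊢
    omega

theorem BlockInvariant.of_growing (hk : 2 ≤ k) (hx : BlockInvariant e x)
    (h : StepsN (growingRules e) k x y) (h0 : Sum.inl 0 ∉ y) (h2 : Sum.inl 2 ∉ y) :
    BlockInvariant e y := by
  obtain ⟨hleft, hright, ha, hb, hc⟩ := h.growing_count
  obtain ⟨hx_left, hx_right, hle, hone, htwo⟩ := hx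
  rw [List.count_eq_zero.2 h0] at ha hb
  rw [List.count_eq_zero.2 h2] at hc
  have hpos : x.count (.inl 0) ≠ 0 := fun hx0 => by
    have := h.growing_add_count hx0
    omega
  exact ⟨by omega, by omega, by simp [List.count_eq_zero.2 h0], by omega, by omega⟩

theorem BlockInvariant.of_preparing (hk : 2 ≤ k) (hx : BlockInvariant e x)
    (h : StepsN preparingRules k x y) (h4 : Sum.inl 4 ∉ y) (h3 : Sum.inl 3 ∉ y) :
    BlockInvariant e y := by
  obtain ⟨hleft, hright, h₀⟩ := h.preparing_count (e 0)
  obtain ⟨-, -, h₁⟩ := h.preparing_count (e 1)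
  obtain ⟨-, -, h₂⟩ := h.preparing_count (e 2)
  obtain ⟨hx_left, hx_right, hle, hone, htwo⟩ := hx
  rw [← List.count_eq_zero] at h4 h3
  have hpos : x.count (.inl 4) ≠ 0 ∨ x.count (.inl 3) ≠ 0 := by
    by_contra! hx43
    have := h.preparing_add_count hx43.1 hx43.2
    omega
  exact ⟨by omega, by omega, by omega, by omega, by omega⟩

theorem letterExcess_eq_zero_of_mem_lang_blockSystem (hk : 2 ≤ k) {w : List T}
    (hw : w ∈ (blockSystem e).lang (.conj .t (.eq k))) : letterExcess e w = 0 := by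
  have hstep {x y : SForm T} (hx : BlockInvariant e x)
      (h : (blockSystem e).ModeStep (.conj .t (.eq k)) x y) : BlockInvariant e y := by
    rcases modeStep_blockSystem_iff.1 h with ⟨h, h0, h2⟩ | ⟨h, h4, -, h3⟩
    · exact hx.of_growing hk h h0 h2
    · exact hx.of_preparing hk h h4 h3
  have hstart : BlockInvariant e [Sum.inl 4] := by constructor <;> simp
  have hinv : BlockInvariant e (w.map Sum.inr) :=
    hw.to_reflTransGen.head_induction_on
      (motive := fun x _ => BlockInvariant e x → BlockInvariant e (w.map Sum.inr))
      id (fun h _ ih hx => ih (hstep hx h)) hstart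
  have hcount (a : T) : (w.map Sum.inr).count (Sum.inr a : Symb T) = w.count a :=
    List.count_map_of_injective w Sum.inr Sum.inr_injective a
  simp [letterExcess, ← hcount, hinv.count_eq_one, hinv.count_eq_two]

end BlockSystem

theorem lang_blockSystem_notMem_CFFam {T : Type} (e : Fin 3 ↪ T) {k : ℕ} (hk : 2 ≤ k) :
    (blockSystem e).lang (.conj .t (.eq k)) ∉ CFFam T := by
  classical
  exact notMem_CFFam_of_abc_mem (fun _ => abc_mem_lang_blockSystem hk)
    fun _ => letterExcess_eq_zero_of_mem_lang_blockSystem hk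

theorem stmt3_general {T : Type} (e : Fin 3 ↪ T) (lf : Bool) {k : ℕ} (hk : 2 ≤ k) :
    CFFamInd T k ⊂ CDFam T lf 2 (.conj .t (.eq k)) := by
  refine ⟨CFFamInd_subset_CDFam T lf k, fun hsub => lang_blockSystem_notMem_CFFam e hk ?_⟩
  have hmem : (blockSystem e).lang (.conj .t (.eq k)) ∈ CDFam T lf 2 (.conj .t (.eq k)) :=
    ⟨blockSystem e, le_rfl, fun _ => lamFree_blockSystem e, rfl⟩
  obtain ⟨G, hG, -⟩ := hsub hmem
  exact ⟨G, hG⟩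

/-- For every k ≥ 2, L_k(CF) ⊊ L(CD_2, CF[−λ], (t∧=k)),
both with and without erasing rules. -/
theorem stmt3 (lf : Bool) (k : ℕ) (hk : 2 ≤ k) :
    CFFamInd ℕ k ⊂ CDFam ℕ lf 2 (Mode.conj Mode.t (Mode.eq k)) := by
  exact stmt3_general Fin.valEmbedding lf hk

end CDHybrid
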